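/- Let S = {1234, 1432, 2143, 2341, 3214, 3412, 4123, 4321}. For every permuton μ it holds that Σ_{π∈S} d(π,μ) ≥ 1/3, and equality holds if and only if μ is the uniform permuton. -/

import Mathlib

open MeasureTheory Filter

noncomputable section

/-- A permuton: a Borel probability measure on `ℝ × ℝ` (supported on `[0,1]²`)
with uniform marginals. -/
def IsPermuton (μ : Measure (ℝ × ℝ)) : Prop :=
  IsProbabilityMeasure μ ∧
    (∀ x x' : ℝ, 0 ≤ x → x ≤ x' → x' ≤ 1 →
      μ (Set.Icc x x' ×ˢ Set.Icc (0 : ℝ) 1) = ENNReal.ofReal (x' - x)) ∧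
    (∀ y y' : ℝ, 0 ≤ y → y ≤ y' → y' ≤ 1 →
      μ (Set.Icc (0 : ℝ) 1 ×ˢ Set.Icc y y') = ENNReal.ofReal (y' - y))

/-- The uniform permuton: two-dimensional Lebesgue measure on `[0,1]²`. -/
def uniformPermuton : Measure (ℝ × ℝ) :=
  volume.restrict (Set.Icc (0 : ℝ) 1 ×ˢ Set.Icc (0 : ℝ) 1)

/-- The support of a Borel measure: all points each of whose open neighbourhoods has
positive measure. -/
def measSupport (μ : Measure (ℝ × ℝ)) : Set (ℝ × ℝ) :=
  {p | ∀ U : Set (ℝ × ℝ), IsOpen U → p ∈ U → 0 < μ U}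

/-- The pattern density of a `k`-permutation `π` in a measure `μ` on `ℝ × ℝ`:
the `μ^{⊗ k}`-probability that `k` sampled points, relabelled so that their
`x`-coordinates increase, have `y`-coordinates ordered according to `π`. -/
def PermutonDensity {k : ℕ} (π : Equiv.Perm (Fin k)) (μ : Measure (ℝ × ℝ)) : ℝ :=
  ((Measure.pi fun _ : Fin k => μ)
    {p : Fin k → ℝ × ℝ | ∃ σ : Equiv.Perm (Fin k),
      StrictMono (fun i => (p (σ i)).1) ∧
        ∀ i j : Fin k, (p (σ i)).2 < (p (σ j)).2 ↔ π i < π j}).toReal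

open scoped Classical in
/-- The pattern density of a `k`-permutation `π` in an `n`-permutation `Π`:
the proportion of `k`-element subsets of `Fin n` on which `Π` induces the pattern `π`
(zero when `n < k`). -/
def PatternDensity {k n : ℕ} (π : Equiv.Perm (Fin k)) (Perm : Equiv.Perm (Fin n)) : ℝ :=
  ((Finset.univ.filter fun A : Finset (Fin n) =>
      ∃ h : A.card = k, ∀ i j : Fin k,
        Perm ↑(A.orderIsoOfFin h i) < Perm ↑(A.orderIsoOfFin h j) ↔ π i < π j).card : ℝ) /
    (n.choose k)

/-- A sequence of permutations (of varying orders) is quasirandom if the density of every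
pattern `π` converges to `1/|π|!`. -/
def Quasirandom (P : ℕ → (n : ℕ) × Equiv.Perm (Fin n)) : Prop :=
  ∀ (k : ℕ) (π : Equiv.Perm (Fin k)),
    Tendsto (fun i => PatternDensity π (P i).2) atTop (nhds (1 / (Nat.factorial k : ℝ)))

/-- A set `S` of `k`-permutations is `Σ`-forcing if a sequence of permutations is quasirandom
exactly when the sum of the densities of the patterns from `S` converges to `|S|/k!`. -/
def SigmaForcing {k : ℕ} (S : Finset (Equiv.Perm (Fin k))) : Prop :=
  ∀ P : ℕ → (n : ℕ) × Equiv.Perm (Fin n),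
    Quasirandom P ↔
      Tendsto (fun i => ∑ π ∈ S, PatternDensity π (P i).2) atTop
        (nhds ((S.card : ℝ) / (Nat.factorial k : ℝ)))

/-- The `4`-permutation written in one-line notation as `(a+1)(b+1)(c+1)(d+1)`
(inputs are 0-indexed). -/
def mk4 (a b c d : Fin 4) (h : Function.Bijective ![a, b, c, d] := by decide) :
    Equiv.Perm (Fin 4) :=
  Equiv.ofBijective _ h

/-- A doubly stochastic matrix: non-negative entries, all row and column sums equal to one. -/
def IsDoublyStochastic {n : ℕ} (A : Matrix (Fin n) (Fin n) ℝ) : Prop :=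
  (∀ i j, 0 ≤ A i j) ∧ (∀ i, ∑ j, A i j = 1) ∧ (∀ j, ∑ i, A i j = 1)

/-- The step permuton `μ[A]` associated with an `n × n` doubly stochastic matrix `A`. -/
def stepPermuton {n : ℕ} (A : Matrix (Fin n) (Fin n) ℝ) : Measure (ℝ × ℝ) :=
  ∑ i : Fin n, ∑ j : Fin n,
    ENNReal.ofReal (A i j * n) •
      volume.restrict
        (Set.Ico ((i : ℝ) / n) (((i : ℝ) + 1) / n) ×ˢ
          Set.Ico ((j : ℝ) / n) (((j : ℝ) + 1) / n))

/-- The matrix `B^{ij}` (0-indexed: `p, q ∈ [n-1]`): `+1` at positions `(p,q)` and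
`(p+1,q+1)`, `-1` at positions `(p,q+1)` and `(p+1,q)`, `0` elsewhere. -/
def Bmat (n : ℕ) (p q : Fin (n - 1)) : Matrix (Fin n) (Fin n) ℝ := fun a b =>
  (if (a : ℕ) = (p : ℕ) ∧ (b : ℕ) = (q : ℕ) then 1 else 0) +
    (if (a : ℕ) = (p : ℕ) + 1 ∧ (b : ℕ) = (q : ℕ) + 1 then 1 else 0) -
    (if (a : ℕ) = (p : ℕ) ∧ (b : ℕ) = (q : ℕ) + 1 then 1 else 0) -
    (if (a : ℕ) = (p : ℕ) + 1 ∧ (b : ℕ) = (q : ℕ) then 1 else 0)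

/-- The matrix `A + ∑_{i,j} x_{ij} B^{ij}` where `A` is the `n × n` matrix with all
entries `1/n`. -/
def pertMatrix (n : ℕ) (x : Fin (n - 1) × Fin (n - 1) → ℝ) : Matrix (Fin n) (Fin n) ℝ :=
  fun a b => 1 / n + ∑ p : Fin (n - 1) × Fin (n - 1), x p * Bmat n p.1 p.2 a b

/-- The function `h_{S,n}`: the sum over `π ∈ S` of the pattern density of `π` in the
step permuton of the perturbed matrix. -/
def hSN (n : ℕ) (S : Finset (Equiv.Perm (Fin 4))) (x : Fin (n - 1) × Fin (n - 1) → ℝ) : ℝ :=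
  ∑ π ∈ S, PermutonDensity π (stepPermuton (pertMatrix n x))

open scoped Classical in
/-- The cover matrix of a set `S` of `4`-permutations: `C i j` is the number of `π ∈ S`
with `π j = i`. -/
def coverMatrix (S : Finset (Equiv.Perm (Fin 4))) : Fin 4 → Fin 4 → ℕ := fun i j =>
  (S.filter fun π => π j = i).card

/-- The eight symmetry operations on `4`-permutations. -/
def symOps : List (Equiv.Perm (Fin 4) → Equiv.Perm (Fin 4)) :=
  [fun σ => σ,
   fun σ => σ * Fin.revPerm,
   fun σ => Fin.revPerm * σ,
   fun σ => Fin.revPerm * σ * Fin.revPerm,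
   fun σ => σ⁻¹,
   fun σ => σ⁻¹ * Fin.revPerm,
   fun σ => Fin.revPerm * σ⁻¹,
   fun σ => Fin.revPerm * σ⁻¹ * Fin.revPerm]

open scoped Classical in
/-- `T` is symmetric to `S` if one of the eight symmetry operations maps `S` onto `T`. -/
def SymmetricSets (S T : Finset (Equiv.Perm (Fin 4))) : Prop :=
  ∃ op ∈ symOps, T = S.image op

end

set_option linter.unusedSectionVars false

/-- bounded measurable functions -/
def BM {α : Type*} [MeasurableSpace α] (f : α → ℝ) : Prop :=
  Measurable f ∧ ∃ C : ℝ, ∀ x, |f x| ≤ C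

namespace BM
variable {α β : Type*} [MeasurableSpace α] [MeasurableSpace β] {f g : α → ℝ}

theorem add (hf : BM f) (hg : BM g) : BM (fun x => f x + g x) := by
  obtain ⟨hf, C, hC⟩ := hf
  obtain ⟨hg, D, hD⟩ := hg
  exact ⟨hf.add hg, C + D, fun x => (abs_add_le _ _).trans (add_le_add (hC x) (hD x))⟩

theorem mul (hf : BM f) (hg : BM g) : BM (fun x => f x * g x) := by
  obtain ⟨hf, C, hC⟩ := hf
  obtain ⟨hg, D, hD⟩ := hg
  refine ⟨hf.mul hg, C * D, fun x => ?_⟩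
  rw [abs_mul]
  exact mul_le_mul (hC x) (hD x) (abs_nonneg _) ((abs_nonneg _).trans (hC x))

theorem const (c : ℝ) : BM (fun _ : α => c) := ⟨measurable_const, |c|, fun _ => le_rfl⟩

theorem sub (hf : BM f) (hg : BM g) : BM (fun x => f x - g x) := by
  have := hf.add ((const (-1)).mul hg)
  simpa [sub_eq_add_neg] using this

theorem sq (hf : BM f) : BM (fun x => f x ^ 2) := by
  simpa [pow_two] using hf.mul hf

theorem comp (hf : BM f) {k : β → α} (hk : Measurable k) : BM (fun x => f (k x)) :=
  ⟨hf.1.comp hk, hf.2.imp fun _ h _ => h _⟩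

theorem integrable (hf : BM f) (μ : Measure α) [IsProbabilityMeasure μ] : Integrable f μ := by
  obtain ⟨hf, C, hC⟩ := hf
  exact Integrable.of_bound hf.aestronglyMeasurable C (Eventually.of_forall hC)

theorem integral {F : β → α → ℝ} (hF : BM (fun z : β × α => F z.1 z.2))
    (μ : Measure α) [IsProbabilityMeasure μ] : BM (fun x => ∫ y, F x y ∂μ) := by
  obtain ⟨hf, C, hC⟩ := hF
  refine ⟨?_, C, fun x => ?_⟩
  · exact (hf.stronglyMeasurable.integral_prod_right (ν := μ)).measurable
  · have := norm_integral_le_of_norm_le_const (μ := μ) (f := F x) (C := C)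
      (Eventually.of_forall fun y => hC (x, y))
    simpa using this
end BM

/-- integrable with a given integral -/
def HI {α : Type*} [MeasurableSpace α] (μ : Measure α) (f : α → ℝ) (v : ℝ) : Prop :=
  Integrable f μ ∧ ∫ x, f x ∂μ = v

namespace HI
variable {α : Type*} [MeasurableSpace α] {μ : Measure α} [IsProbabilityMeasure μ]
  {f g : α → ℝ} {v w : ℝ}

theorem add (hf : HI μ f v) (hg : HI μ g w) : HI μ (fun x => f x + g x) (v + w) :=
  ⟨hf.1.add hg.1, by rw [integral_add hf.1 hg.1, hf.2, hg.2]⟩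

theorem sub (hf : HI μ f v) (hg : HI μ g w) : HI μ (fun x => f x - g x) (v - w) :=
  ⟨hf.1.sub hg.1, by rw [integral_sub hf.1 hg.1, hf.2, hg.2]⟩

theorem cmul (c : ℝ) (hf : HI μ f v) : HI μ (fun x => c * f x) (c * v) :=
  ⟨hf.1.const_mul c, by rw [integral_const_mul, hf.2]⟩

theorem const (μ : Measure α) [IsProbabilityMeasure μ] (c : ℝ) : HI μ (fun _ => c) c :=
  ⟨integrable_const _, by simp⟩

theorem of (hf : BM f) (μ : Measure α) [IsProbabilityMeasure μ] : HI μ f (∫ x, f x ∂μ) :=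
  ⟨hf.integrable μ, rfl⟩

theorem eq' (hf : HI μ f v) (h : ∀ x, g x = f x) (hv : w = v) : ∫ x, g x ∂μ = w := by
  rw [hv, ← hf.2]; exact integral_congr_ae (Eventually.of_forall h)
end HI

section moments
variable {α : Type*} [MeasurableSpace α] (μ : Measure α) [IsProbabilityMeasure μ]

theorem moment_lemma {U V : α → ℝ} (hU : BM U) (hV : BM V)
    (hU0 : ∫ x, U x ∂μ = 0) (hV0 : ∫ x, V x ∂μ = 0) :
    ∫ c, ∫ d, (U c - U d) ^ 2 * (V c - V d) ^ 2 ∂μ ∂μ =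
      2 * ∫ c, U c ^ 2 * V c ^ 2 ∂μ + 2 * ((∫ c, U c ^ 2 ∂μ) * ∫ c, V c ^ 2 ∂μ)
        + 4 * (∫ c, U c * V c ∂μ) ^ 2 := by
  have h10 : HI μ U 0 := ⟨hU.integrable μ, hU0⟩
  have h01 : HI μ V 0 := ⟨hV.integrable μ, hV0⟩
  have h11 := HI.of (hU.mul hV) μ
  have h20 := HI.of hU.sq μ
  have h02 := HI.of hV.sq μ
  have h21 := HI.of (hU.sq.mul hV) μ
  have h12 := HI.of (hU.mul hV.sq) μ
  have h22 := HI.of (hU.sq.mul hV.sq) μ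
  have inner : ∀ c, ∫ d, (U c - U d) ^ 2 * (V c - V d) ^ 2 ∂μ =
      U c ^ 2 * V c ^ 2 + (∫ x, V x ^ 2 ∂μ) * U c ^ 2 + (∫ x, U x ^ 2 ∂μ) * V c ^ 2
       + (4 * ∫ x, U x * V x ∂μ) * (U c * V c) - (2 * ∫ x, U x * V x ^ 2 ∂μ) * U c
       - (2 * ∫ x, U x ^ 2 * V x ∂μ) * V c + ∫ x, U x ^ 2 * V x ^ 2 ∂μ := by
    intro c
    refine HI.eq' (((((((((HI.const μ (U c ^ 2 * V c ^ 2)).add (h02.cmul (U c ^ 2))).add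
      (h20.cmul (V c ^ 2))).add (h11.cmul (4 * U c * V c))).sub (h12.cmul (2 * U c))).sub
      (h21.cmul (2 * V c))).add h22).sub (h10.cmul (2 * U c * V c ^ 2))).sub
      (h01.cmul (2 * U c ^ 2 * V c))) (fun d => ?_) ?_
    · ring
    · ring
  simp_rw [inner]
  refine HI.eq' ((((((h22.add (h20.cmul _)).add (h02.cmul _)).add (h11.cmul _)).sub
    (h10.cmul _)).sub (h01.cmul _)).add (HI.const μ _)) (fun d => rfl) ?_
  ring

variable {X Y : α → α → ℝ} 

theorem h_sq_lemma (hX : BM (fun z : α × α => X z.1 z.2)) (hY : BM (fun z : α × α => Y z.1 z.2)) :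
    ∫ p, ∫ q, (∫ r, X p r * X q r ∂μ) * (∫ r, Y p r * Y q r ∂μ) ∂μ ∂μ =
    ∫ r, ∫ s, (∫ p, X p r * Y p s ∂μ) ^ 2 ∂μ ∂μ := by
  have e1 : ∀ p q, (∫ r, X p r * X q r ∂μ) * (∫ r, Y p r * Y q r ∂μ) =
      ∫ z : α × α, (X p z.1 * X q z.1) * (Y p z.2 * Y q z.2) ∂(μ.prod μ) := fun p q =>
    (integral_prod_mul _ _).symm
  have e2 : ∀ r s, (∫ p, X p r * Y p s ∂μ) ^ 2 =
      ∫ z : α × α, (X z.1 r * Y z.1 s) * (X z.2 r * Y z.2 s) ∂(μ.prod μ) := fun p q => by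
    rw [pow_two]; exact (integral_prod_mul _ _).symm
  simp_rw [e1, e2]
  have hF : BM (fun w : (α × α) × (α × α) =>
     (X w.1.1 w.2.1 * X w.1.2 w.2.1) * (Y w.1.1 w.2.2 * Y w.1.2 w.2.2)) := by
    refine BM.mul (BM.mul ?_ ?_) (BM.mul ?_ ?_)
    · exact hX.comp (k := fun w : (α × α) × (α × α) => (w.1.1, w.2.1)) (by fun_prop)
    · exact hX.comp (k := fun w : (α × α) × (α × α) => (w.1.2, w.2.1)) (by fun_prop)
    · exact hY.comp (k := fun w : (α × α) × (α × α) => (w.1.1, w.2.2)) (by fun_prop)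
    · exact hY.comp (k := fun w : (α × α) × (α × α) => (w.1.2, w.2.2)) (by fun_prop)
  have hI := hF.integrable ((μ.prod μ).prod (μ.prod μ))
  rw [← integral_prod (f := fun y : α × α => ∫ z : α × α, (X y.1 z.1 * X y.2 z.1) * (Y y.1 z.2 * Y y.2 z.2) ∂(μ.prod μ)) hI.integral_prod_left]
  rw [← integral_prod (f := fun y : α × α => ∫ z : α × α, (X z.1 y.1 * Y z.1 y.2) * (X z.2 y.1 * Y z.2 y.2) ∂(μ.prod μ))]
  · rw [integral_integral_swap hI]
    congr 1; ext y; congr 1; ext z; ring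
  · have := hI.integral_prod_right
    refine this.congr (Eventually.of_forall fun y => ?_)
    simp only []
    congr 1; ext z; ring

structure Ker (μ : Measure α) (X : α → α → ℝ) : Prop where
  bm : BM (fun z : α × α => X z.1 z.2)
  anti : ∀ p q, X p q = - X q p
  zero : ∀ p, ∫ q, X p q ∂μ = 0
  sq : ∀ p, ∫ q, X p q ^ 2 ∂μ = 1 / 12
  conv : ∀ p, ∀ᵐ q ∂μ, X p q ^ 2 = 1 / 12 + 2 * ∫ r, X p r * X q r ∂μ

namespace Ker
variable {μ}
theorem right (hX : Ker μ X) (p : α) : BM (fun q => X p q) :=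
  hX.bm.comp (k := fun q => (p, q)) (by fun_prop)

theorem convBM (hX : Ker μ X) (hY : Ker μ Y) :
    BM (fun z : α × α => ∫ r, X z.1 r * Y z.2 r ∂μ) := by
  refine BM.integral (F := fun (z : α × α) r => X z.1 r * Y z.2 r) ?_ μ
  exact BM.mul (hX.bm.comp (k := fun w : (α × α) × α => (w.1.1, w.2)) (by fun_prop))
    (hY.bm.comp (k := fun w : (α × α) × α => (w.1.2, w.2)) (by fun_prop))

end Ker

/-- main bilinear functional -/
noncomputable def hh (μ : Measure α) (X Y : α → α → ℝ) (p q : α) : ℝ := ∫ r, X p r * Y q r ∂μ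

theorem conv_zero (hX : Ker μ X) (hY : Ker μ Y) (p : α) : HI μ (fun q => hh μ X Y p q) 0 := by
  have hb := (hX.convBM hY).comp (k := fun q => (p, q)) (by fun_prop)
  refine ⟨hb.integrable μ, ?_⟩
  unfold hh
  rw [integral_integral_swap]
  · have : ∀ r, ∫ q, X p r * Y q r ∂μ = 0 := by
      intro r
      rw [integral_const_mul]
      have : ∫ q, Y q r ∂μ = ∫ q, - Y r q ∂μ := by congr 1; ext q; exact hY.anti _ _
      rw [this, integral_neg, hY.zero]; simp
    simp [this]
  · refine BM.integrable (μ := μ.prod μ) (f := fun z : α × α => X p z.2 * Y z.1 z.2) ?_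
    exact BM.mul ((hX.right p).comp measurable_snd) hY.bm

theorem conv_symm (hX : Ker μ X) (hY : Ker μ Y) (p q : α) :
    ∫ r, X r p * Y r q ∂μ = hh μ X Y p q := by
  unfold hh
  congr 1; ext r; rw [hX.anti r p, hY.anti r q]; ring

theorem beta (hX : Ker μ X) (hY : Ker μ Y) :
    ∫ p, ∫ q, X p q ^ 2 * Y p q ^ 2 ∂μ ∂μ =
      1 / 144 + 4 * ∫ p, ∫ q, hh μ X Y p q ^ 2 ∂μ ∂μ := by
  have hL := h_sq_lemma μ hX.bm hY.bm
  simp_rw [conv_symm μ hX hY] at hL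
  rw [← hL]
  have h1 : ∀ p, ∫ q, X p q ^ 2 * Y p q ^ 2 ∂μ =
      1 / 144 + 4 * ∫ q, hh μ X X p q * hh μ Y Y p q ∂μ := by
    intro p
    have hx := conv_zero μ hX hX p
    have hy := conv_zero μ hY hY p
    have hxy := HI.of (((hX.convBM hX).comp (k := fun q => (p, q)) (by fun_prop)).mul
      ((hY.convBM hY).comp (k := fun q => (p, q)) (by fun_prop))) μ
    have := (((HI.const μ (1 / 144)).add (hx.cmul (1 / 6))).add (hy.cmul (1 / 6))).add (hxy.cmul 4)
    have e := this.2
    simp only [hh] at e ⊢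
    rw [show (1 / 144 : ℝ) + 1 / 6 * 0 + 1 / 6 * 0 = 1 / 144 by norm_num] at e
    rw [← e]
    refine integral_congr_ae ?_
    filter_upwards [hX.conv p, hY.conv p] with q h1 h2
    rw [h1, h2]; ring
  simp_rw [h1]
  have hb : BM (fun z : α × α => hh μ X X z.1 z.2 * hh μ Y Y z.1 z.2) :=
    (hX.convBM hX).mul (hY.convBM hY)
  exact ((HI.const μ (1 / 144)).add ((HI.of (BM.integral
    (F := fun p q => hh μ X X p q * hh μ Y Y p q) hb μ) μ).cmul 4)).2

theorem main_formula (hX : Ker μ X) (hY : Ker μ Y) :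
    ∫ a, ∫ b, ∫ c, ∫ d, (X a c - X b c - X a d + X b d) ^ 2 *
      (Y a c - Y b c - Y a d + Y b d) ^ 2 ∂μ ∂μ ∂μ ∂μ =
    1 / 9 + 32 * ∫ p, ∫ q, hh μ X Y p q ^ 2 ∂μ ∂μ + 16 * ∫ p, hh μ X Y p p ^ 2 ∂μ
      + 8 * (∫ p, hh μ X Y p p ∂μ) ^ 2 + 8 * ∫ p, ∫ q, hh μ X Y p q * hh μ X Y q p ∂μ ∂μ := by
  set L := ∫ p, ∫ q, hh μ X Y p q ^ 2 ∂μ ∂μ with hL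
  have hxy := hX.convBM hY
  -- first application
  have s1 : ∀ a b, ∫ c, ∫ d, (X a c - X b c - X a d + X b d) ^ 2 *
      (Y a c - Y b c - Y a d + Y b d) ^ 2 ∂μ ∂μ =
      2 * ∫ c, (X a c - X b c) ^ 2 * (Y a c - Y b c) ^ 2 ∂μ
      + 2 * ((1 / 6 - 2 * hh μ X X a b) * (1 / 6 - 2 * hh μ Y Y a b))
      + 4 * (hh μ X Y a a - hh μ X Y a b - hh μ X Y b a + hh μ X Y b b) ^ 2 := by
    intro a b
    have z : ∀ {Z : α → α → ℝ}, Ker μ Z → ∫ c, (Z a c - Z b c) ∂μ = 0 := by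
      intro Z hZ
      rw [integral_sub ((hZ.right a).integrable μ) ((hZ.right b).integrable μ), hZ.zero, hZ.zero]
      simp
    have s : ∀ {Z : α → α → ℝ}, Ker μ Z → ∫ c, (Z a c - Z b c) ^ 2 ∂μ = 1 / 6 - 2 * hh μ Z Z a b := by
      intro Z hZ
      have ha : HI μ (fun c => Z a c ^ 2) (1 / 12) := ⟨(hZ.right a).sq.integrable μ, hZ.sq a⟩
      have hb : HI μ (fun c => Z b c ^ 2) (1 / 12) := ⟨(hZ.right b).sq.integrable μ, hZ.sq b⟩
      have hab := HI.of ((hZ.right a).mul (hZ.right b)) μ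
      refine HI.eq' ((ha.add hb).sub (hab.cmul 2)) (fun c => by ring) ?_
      unfold hh; norm_num
    have c : ∫ c, (X a c - X b c) * (Y a c - Y b c) ∂μ =
       hh μ X Y a a - hh μ X Y a b - hh μ X Y b a + hh μ X Y b b := by
      have k := fun a b => HI.of ((hX.right a).mul (hY.right b)) μ
      exact HI.eq' ((((k a a).sub (k a b)).sub (k b a)).add (k b b)) (fun c => by ring) rfl
    rw [← c, ← s hX, ← s hY, ← moment_lemma μ ((hX.right a).sub (hX.right b))
      ((hY.right a).sub (hY.right b)) (z hX) (z hY)]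
    congr 1; ext c; congr 1; ext d; ring
  simp_rw [s1]
  -- BM facts for pieces
  have p1 : BM (fun z : α × α => ∫ c, (X z.1 c - X z.2 c) ^ 2 * (Y z.1 c - Y z.2 c) ^ 2 ∂μ) := by
    refine BM.integral (F := fun (z : α × α) c => (X z.1 c - X z.2 c) ^ 2 * (Y z.1 c - Y z.2 c) ^ 2) ?_ μ
    have k : ∀ {Z : α → α → ℝ}, Ker μ Z → BM (fun w : (α × α) × α => (Z w.1.1 w.2 - Z w.1.2 w.2) ^ 2) :=
      fun hZ => ((hZ.bm.comp (k := fun w : (α × α) × α => (w.1.1, w.2)) (by fun_prop)).sub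
        (hZ.bm.comp (k := fun w : (α × α) × α => (w.1.2, w.2)) (by fun_prop))).sq
    exact (k hX).mul (k hY)
  have diag : BM (fun p => hh μ X Y p p) := hxy.comp (k := fun p => (p, p)) (by fun_prop)
  have sw : BM (fun z : α × α => hh μ X Y z.2 z.1) := hxy.comp (k := fun z : α × α => (z.2, z.1)) (by fun_prop)
  have lft : ∀ b, HI μ (fun a => hh μ X Y a b) 0 := by
    intro b
    have := conv_zero μ hY hX b
    have e : (fun q => hh μ Y X b q) = fun a => hh μ X Y a b := by
      funext q; unfold hh; congr 1; ext r; ring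
    rwa [e] at this
  -- piece two
  have t2 : ∫ a, ∫ b, hh μ X X a b * hh μ Y Y a b ∂μ ∂μ = L := by
    have := h_sq_lemma μ hX.bm hY.bm
    simp_rw [conv_symm μ hX hY] at this
    exact this
  -- piece one
  have t1 : ∫ a, ∫ b, ∫ c, (X a c - X b c) ^ 2 * (Y a c - Y b c) ^ 2 ∂μ ∂μ ∂μ =
      2 * (1 / 144 + 4 * L) + 2 * (1 / 144) + 4 * ∫ p, hh μ X Y p p ^ 2 ∂μ := by
    have hI : BM (fun w : α × (α × α) => (X w.2.1 w.1 - X w.2.2 w.1) ^ 2 * (Y w.2.1 w.1 - Y w.2.2 w.1) ^ 2) := by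
      have k : ∀ {Z : α → α → ℝ}, Ker μ Z → BM (fun w : α × (α × α) => (Z w.2.1 w.1 - Z w.2.2 w.1) ^ 2) :=
        fun hZ => ((hZ.bm.comp (k := fun w : α × (α × α) => (w.2.1, w.1)) (by fun_prop)).sub
        (hZ.bm.comp (k := fun w : α × (α × α) => (w.2.2, w.1)) (by fun_prop))).sq
      exact (k hX).mul (k hY)
    rw [← integral_prod (f := fun z : α × α => ∫ c, (X z.1 c - X z.2 c) ^ 2 * (Y z.1 c - Y z.2 c) ^ 2 ∂μ)
       (p1.integrable _)]
    rw [← integral_integral_swap (f := fun (c : α) (z : α × α) =>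
       (X z.1 c - X z.2 c) ^ 2 * (Y z.1 c - Y z.2 c) ^ 2) (hI.integrable (μ.prod (μ.prod μ)))]
    have e : ∀ c, ∫ z : α × α, (X z.1 c - X z.2 c) ^ 2 * (Y z.1 c - Y z.2 c) ^ 2 ∂(μ.prod μ) =
        2 * ∫ a, X c a ^ 2 * Y c a ^ 2 ∂μ + 2 * (1 / 144) + 4 * hh μ X Y c c ^ 2 := by
      intro c
      rw [integral_prod _ ((hI.comp (k := fun z => (c, z)) (by fun_prop)).integrable _)]
      have := moment_lemma μ (hX.right c) (hY.right c) (hX.zero c) (hY.zero c)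
      rw [hX.sq, hY.sq] at this
      rw [show (2 * (1 / 144) : ℝ) = 2 * (1 / 12 * (1 / 12)) by norm_num]
      unfold hh
      rw [← this]
      congr 1; ext a; congr 1; ext b
      simp only []
      rw [hX.anti a c, hX.anti b c, hY.anti a c, hY.anti b c]; ring
    simp_rw [e]
    rw [← beta μ hX hY]
    exact ((((HI.of (BM.integral (F := fun c a => X c a ^ 2 * Y c a ^ 2) (hX.bm.sq.mul hY.bm.sq) μ) μ).cmul 2).add
      (HI.const μ _)).add ((HI.of diag.sq μ).cmul 4)).2
  -- inner integral over b
  have hxx := hX.convBM hX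
  have hyy := hY.convBM hY
  have sec : ∀ {f : α × α → ℝ} (a : α), BM f → BM (fun b => f (a, b)) := fun a hf =>
    hf.comp (k := fun b => (a, b)) (by fun_prop)
  set m := ∫ p, hh μ X Y p p ∂μ with hm
  set Q := ∫ p, hh μ X Y p p ^ 2 ∂μ with hQ
  have inner : ∀ a, ∫ b, (2 * ∫ c, (X a c - X b c) ^ 2 * (Y a c - Y b c) ^ 2 ∂μ
      + 2 * ((1 / 6 - 2 * hh μ X X a b) * (1 / 6 - 2 * hh μ Y Y a b))
      + 4 * (hh μ X Y a a - hh μ X Y a b - hh μ X Y b a + hh μ X Y b b) ^ 2) ∂μ =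
      2 * (∫ b, ∫ c, (X a c - X b c) ^ 2 * (Y a c - Y b c) ^ 2 ∂μ ∂μ) + 1 / 18
      + 8 * (∫ b, hh μ X X a b * hh μ Y Y a b ∂μ)
      + 4 * (hh μ X Y a a ^ 2) + 4 * (∫ b, hh μ X Y a b ^ 2 ∂μ) + 4 * (∫ b, hh μ X Y b a ^ 2 ∂μ)
      + 4 * Q + 8 * m * hh μ X Y a a + 8 * (∫ b, hh μ X Y a b * hh μ X Y b a ∂μ)
      - 8 * (∫ b, hh μ X Y a b * hh μ X Y b b ∂μ) - 8 * (∫ b, hh μ X Y b a * hh μ X Y b b ∂μ) := by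
    intro a
    have i1 := HI.of (sec a p1) μ
    have i2 := HI.of ((sec a hxx).mul (sec a hyy)) μ
    have i3 := conv_zero μ hX hX a
    have i4 := conv_zero μ hY hY a
    have i5 := conv_zero μ hX hY a
    have i6 := lft a
    have i7 := HI.of (sec a hxy).sq μ
    have i8 := HI.of (sec a sw).sq μ
    have i9 := HI.of diag.sq μ
    have i10 := HI.of diag μ
    have i11 := HI.of ((sec a hxy).mul (sec a sw)) μ
    have i12 := HI.of ((sec a hxy).mul diag) μ
    have i13 := HI.of ((sec a sw).mul diag) μ
    refine HI.eq' ((((((((((((((i1.cmul 2).add (HI.const μ (1 / 18))).add (i2.cmul 8)).add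
      (HI.const μ (4 * (hh μ X Y a a ^ 2)))).add (i7.cmul 4)).add (i8.cmul 4)).add (i9.cmul 4)).add
      (i10.cmul (8 * hh μ X Y a a))).add (i11.cmul 8)).sub (i12.cmul 8)).sub (i13.cmul 8)).sub
      ((i3.add i4).cmul (2 / 3))).sub ((i5.add i6).cmul (8 * hh μ X Y a a)))) (fun b => ?_) ?_
    · simp only [hh]; ring
    · simp only [hh, hm, hQ]; ring
  simp_rw [inner]
  -- outer integral
  have o1 := HI.of (BM.integral (F := fun a b => ∫ c, (X a c - X b c) ^ 2 * (Y a c - Y b c) ^ 2 ∂μ) p1 μ) μ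
  have o2 := HI.of (BM.integral (F := fun a b => hh μ X X a b * hh μ Y Y a b) (hxx.mul hyy) μ) μ
  have o3 := HI.of diag.sq μ
  have o4 := HI.of (BM.integral (F := fun a b => hh μ X Y a b ^ 2) hxy.sq μ) μ
  have o5 := HI.of (BM.integral (F := fun a b => hh μ X Y b a ^ 2) sw.sq μ) μ
  have o6 := HI.of diag μ
  have o7 := HI.of (BM.integral (F := fun a b => hh μ X Y a b * hh μ X Y b a) (hxy.mul sw) μ) μ
  have dg2 : BM (fun z : α × α => hh μ X Y z.2 z.2) := diag.comp measurable_snd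
  have o8 : HI μ (fun a => ∫ b, hh μ X Y a b * hh μ X Y b b ∂μ) 0 := by
    have hb : BM (fun z : α × α => hh μ X Y z.1 z.2 * hh μ X Y z.2 z.2) := hxy.mul dg2
    refine ⟨(BM.integral (F := fun a b => hh μ X Y a b * hh μ X Y b b) hb μ).integrable μ, ?_⟩
    rw [integral_integral_swap (hb.integrable (μ.prod μ))]
    simp_rw [integral_mul_const, fun b => (lft b).2]; simp
  have o9 : HI μ (fun a => ∫ b, hh μ X Y b a * hh μ X Y b b ∂μ) 0 := by
    have hb : BM (fun z : α × α => hh μ X Y z.2 z.1 * hh μ X Y z.2 z.2) := sw.mul dg2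
    refine ⟨(BM.integral (F := fun a b => hh μ X Y b a * hh μ X Y b b) hb μ).integrable μ, ?_⟩
    rw [integral_integral_swap (hb.integrable (μ.prod μ))]
    simp_rw [integral_mul_const, fun b => (conv_zero μ hX hY b).2]; simp
  have e5 : ∫ a, ∫ b, hh μ X Y b a ^ 2 ∂μ ∂μ = L :=
    integral_integral_swap (sw.sq.integrable (μ.prod μ))
  refine HI.eq' ((((((((((o1.cmul 2).add (HI.const μ (1 / 18))).add (o2.cmul 8)).add
    (o3.cmul 4)).add (o4.cmul 4)).add (o5.cmul 4)).add (HI.const μ (4 * Q))).add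
    (o6.cmul (8 * m))).add (o7.cmul 8)).sub (o8.cmul 8) |>.sub (o9.cmul 8)) (fun _ => rfl) ?_
  rw [t1, t2, e5, ← hm, ← hQ, ← hL]
  ring

/-- Cauchy-Schwarz-type bound. -/
theorem LT_nonneg (hX : Ker μ X) (hY : Ker μ Y) :
    0 ≤ (∫ p, ∫ q, hh μ X Y p q ^ 2 ∂μ ∂μ) + ∫ p, ∫ q, hh μ X Y p q * hh μ X Y q p ∂μ ∂μ := by
  have hxy : BM (fun z : α × α => hh μ X Y z.1 z.2) := hX.convBM hY
  have sw : BM (fun z : α × α => hh μ X Y z.2 z.1) := hxy.comp (k := fun z : α × α => (z.2, z.1)) (by fun_prop)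
  have e5 : ∫ a, ∫ b, hh μ X Y b a ^ 2 ∂μ ∂μ = ∫ a, ∫ b, hh μ X Y a b ^ 2 ∂μ ∂μ :=
    integral_integral_swap (sw.sq.integrable (μ.prod μ))
  have a1 := HI.of hxy.sq (μ.prod μ)
  have a2 := HI.of sw.sq (μ.prod μ)
  have a3 := HI.of (hxy.mul sw) (μ.prod μ)
  have := HI.eq' (((a1.add a2).add (a3.cmul 2))) (g := fun z : α × α => (hh μ X Y z.1 z.2 + hh μ X Y z.2 z.1) ^ 2)
    (fun z => by ring) rfl
  have nn : 0 ≤ ∫ z : α × α, (hh μ X Y z.1 z.2 + hh μ X Y z.2 z.1) ^ 2 ∂(μ.prod μ) :=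
    integral_nonneg fun _ => sq_nonneg _
  rw [this, integral_prod _ a1.1, integral_prod _ a2.1, integral_prod _ a3.1, e5] at nn
  linarith
end moments


/-- clamp to the unit interval -/
noncomputable def clp (x : ℝ) : ℝ := max 0 (min x 1)

/-- the sawtooth kernel -/
noncomputable def bk (x y : ℝ) : ℝ :=
  clp x - clp y - (if y < x then 1 / 2 else if x < y then -(1 / 2) else 0)

theorem clp_nonneg (x : ℝ) : 0 ≤ clp x := le_max_left _ _
theorem clp_le (x : ℝ) : clp x ≤ 1 := max_le zero_le_one (min_le_right _ _)
theorem clp_cont : Continuous clp := by unfold clp; fun_prop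
theorem clp_of_mem {x : ℝ} (h0 : 0 ≤ x) (h1 : x ≤ 1) : clp x = x := by
  unfold clp; rw [min_eq_left h1, max_eq_right h0]
theorem lt_clp_iff {r x : ℝ} (h0 : 0 < r) (h1 : r < 1) : r < clp x ↔ r < x := by
  unfold clp
  simp only [lt_max_iff, lt_min_iff]
  constructor
  · rintro (h | h)
    · linarith
    · exact h.1
  · intro h; exact Or.inr ⟨h, h1⟩
theorem clp_lt_iff {r x : ℝ} (h0 : 0 < r) (h1 : r < 1) : clp x < r ↔ x < r := by
  unfold clp
  simp only [max_lt_iff, min_lt_iff]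
  constructor
  · rintro ⟨_, h | h⟩
    · exact h
    · linarith
  · intro h; exact ⟨h0, Or.inl h⟩

theorem clp_clp (x : ℝ) : clp (clp x) = clp x := clp_of_mem (clp_nonneg x) (clp_le x)

theorem bk_clp {r : ℝ} (h0 : 0 < r) (h1 : r < 1) (x : ℝ) : bk (clp x) r = bk x r := by
  unfold bk
  simp only [lt_clp_iff h0 h1, clp_lt_iff h0 h1, clp_clp]

theorem bk_anti (x y : ℝ) : bk x y = - bk y x := by
  unfold bk
  rcases lt_trichotomy x y with h | h | h
  · simp [h, not_lt.2 h.le]; ring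
  · simp [h]
  · simp [h, not_lt.2 h.le]; ring

theorem bk_bm : BM (fun z : ℝ × ℝ => bk z.1 z.2) := by
  constructor
  · unfold bk
    refine Measurable.sub (Measurable.sub (clp_cont.measurable.comp measurable_fst)
      (clp_cont.measurable.comp measurable_snd)) ?_
    exact Measurable.ite (measurableSet_lt measurable_snd measurable_fst) measurable_const
      (Measurable.ite (measurableSet_lt measurable_fst measurable_snd) measurable_const measurable_const)
  · refine ⟨2, fun z => ?_⟩
    unfold bk
    have := clp_nonneg z.1
    have := clp_le z.1
    have := clp_nonneg z.2
    have := clp_le z.2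
    simp only []
    rw [abs_le]
    split_ifs <;> constructor <;> linarith

theorem bk_bm_right (x : ℝ) : BM (fun y => bk x y) :=
  bk_bm.comp (k := fun y => (x, y)) (by fun_prop)

theorem bk_tri {x y z : ℝ} (h1 : x ≠ y) (h2 : x ≠ z) (h3 : y ≠ z) :
    (bk x y + bk y z - bk x z) ^ 2 = 1 / 4 := by
  unfold bk
  rcases lt_or_gt_of_ne h1 with a | a <;> rcases lt_or_gt_of_ne h2 with b | b <;>
    rcases lt_or_gt_of_ne h3 with c | c <;>
    simp only [a, b, c, not_lt.2 a.le, not_lt.2 b.le, not_lt.2 c.le, if_true, if_false] <;>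
    first | (exfalso; linarith) | ring

noncomputable abbrev uI : Measure ℝ := volume.restrict (Set.Icc (0 : ℝ) 1)

instance : IsProbabilityMeasure uI := ⟨by simp [uI]⟩

theorem uI_bk (g : ℝ → ℝ) (hg : Continuous g) (x : ℝ) :
    ∫ t, g (bk x t) ∂uI = ∫ t in (-(1 / 2) : ℝ)..(1 / 2), g t := by
  have hc0 := clp_nonneg x
  have hc1 := clp_le x
  have hIntv : IntervalIntegrable (fun t => g (bk x t)) volume 0 1 := by
    rw [intervalIntegrable_iff_integrableOn_Icc_of_le zero_le_one]
    obtain ⟨hm, C, hC⟩ := bk_bm_right x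
    obtain ⟨D, hD⟩ := (isCompact_Icc (a := -C) (b := C)).exists_bound_of_continuousOn hg.continuousOn
    exact Integrable.of_bound (μ := uI) (hg.measurable.comp hm).aestronglyMeasurable D
      (Eventually.of_forall fun t => hD _ (abs_le.1 (hC t)))
  have e0 : ∫ t, g (bk x t) ∂uI = ∫ t in (0 : ℝ)..1, g (bk x t) := by
    rw [intervalIntegral.integral_of_le zero_le_one, integral_Icc_eq_integral_Ioc]
  have sub1 : IntervalIntegrable (fun t => g (bk x t)) volume 0 (clp x) :=
    hIntv.mono_set (by rw [Set.uIcc_of_le hc0, Set.uIcc_of_le zero_le_one]; exact Set.Icc_subset_Icc le_rfl hc1)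
  have sub2 : IntervalIntegrable (fun t => g (bk x t)) volume (clp x) 1 :=
    hIntv.mono_set (by rw [Set.uIcc_of_le hc1, Set.uIcc_of_le zero_le_one]; exact Set.Icc_subset_Icc hc0 le_rfl)
  have e1 : ∫ t in (0 : ℝ)..(clp x), g (bk x t) = ∫ t in (0 : ℝ)..(clp x), g ((clp x - 1 / 2) - t) := by
    refine intervalIntegral.integral_congr_Ioo_of_le hc0 fun t ht => ?_
    have h1 : t < 1 := ht.2.trans_le hc1
    have hx : t < x := (lt_clp_iff ht.1 h1).1 ht.2
    simp only [bk, hx, if_true, clp_of_mem ht.1.le h1.le]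
    congr 1; ring
  have e2 : ∫ t in (clp x)..1, g (bk x t) = ∫ t in (clp x)..1, g ((clp x + 1 / 2) - t) := by
    refine intervalIntegral.integral_congr_Ioo_of_le hc1 fun t ht => ?_
    have h1 : 0 < t := hc0.trans_lt ht.1
    have hx : x < t := (clp_lt_iff h1 ht.2).1 ht.1
    simp only [bk, hx, not_lt.2 hx.le, if_true, if_false, clp_of_mem h1.le ht.2.le]
    congr 1; ring
  rw [e0, ← intervalIntegral.integral_add_adjacent_intervals sub1 sub2, e1, e2,
    intervalIntegral.integral_comp_sub_left (fun t => g t),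
    intervalIntegral.integral_comp_sub_left (fun t => g t), add_comm]
  rw [show clp x + 1 / 2 - 1 = clp x - 1 / 2 by ring, show clp x - 1 / 2 - clp x = -(1 / 2) by ring,
    show clp x - 1 / 2 - 0 = clp x - 1 / 2 by ring, show clp x + 1 / 2 - clp x = 1 / 2 by ring, add_comm]
  exact intervalIntegral.integral_add_adjacent_intervals (hg.intervalIntegrable _ _) (hg.intervalIntegrable _ _)

theorem uI_bk_zero (x : ℝ) : ∫ t, bk x t ∂uI = 0 := by
  rw [uI_bk (fun t => t) continuous_id x]; simp

theorem uI_bk_sq (x : ℝ) : ∫ t, bk x t ^ 2 ∂uI = 1 / 12 := by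
  rw [uI_bk (fun t => t ^ 2) (by fun_prop) x, integral_pow]; norm_num

/-- For a measure with uniform marginal under `π`, the pulled back sawtooth is a kernel. -/
theorem ker_of_marginal {α : Type*} [MeasurableSpace α] (μ : Measure α) [IsProbabilityMeasure μ]
    (π : α → ℝ) (hπ : Measurable π) (h : μ.map π = uI) : Ker μ (fun p q => bk (π p) (π q)) := by
  have bm : BM (fun z : α × α => bk (π z.1) (π z.2)) :=
    bk_bm.comp (k := fun z : α × α => (π z.1, π z.2)) (by fun_prop)
  have rt : ∀ p, BM (fun q => bk (π p) (π q)) := fun p => bm.comp (k := fun q => (p, q)) (by fun_prop)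
  have z : ∀ p, ∫ q, bk (π p) (π q) ∂μ = 0 := by
    intro p
    rw [← integral_map (f := fun t => bk (π p) t) hπ.aemeasurable (bk_bm_right _).1.aestronglyMeasurable, h, uI_bk_zero]
  have s : ∀ p, ∫ q, bk (π p) (π q) ^ 2 ∂μ = 1 / 12 := by
    intro p
    rw [← integral_map (f := fun t => bk (π p) t ^ 2) hπ.aemeasurable (bk_bm_right _).sq.1.aestronglyMeasurable, h, uI_bk_sq]
  have ne : ∀ x : ℝ, ∀ᵐ q ∂μ, x ≠ π q := by
    intro x
    have : ∀ᵐ t ∂(μ.map π), x ≠ t := by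
      rw [h]
      refine ae_restrict_of_ae ?_
      filter_upwards [Measure.ae_ne volume x] with t ht using ht.symm
    exact ae_of_ae_map hπ.aemeasurable this
  refine ⟨bm, fun p q => bk_anti _ _, z, s, fun p => ?_⟩
  filter_upwards [ne (π p)] with q hq
  have e : ∀ᵐ r ∂μ, (1 / 4 : ℝ) = bk (π p) (π q) ^ 2 + bk (π q) (π r) ^ 2 + bk (π p) (π r) ^ 2
      + (2 * bk (π p) (π q)) * bk (π q) (π r) - (2 * bk (π p) (π q)) * bk (π p) (π r)
      - 2 * (bk (π p) (π r) * bk (π q) (π r)) := by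
    filter_upwards [ne (π p), ne (π q)] with r h1 h2
    rw [← bk_tri hq h1 h2]; ring
  have := integral_congr_ae e
  have hz : ∀ p, HI μ (fun q => bk (π p) (π q)) 0 := fun p => ⟨(rt p).integrable μ, z p⟩
  have hs : ∀ p, HI μ (fun q => bk (π p) (π q) ^ 2) (1 / 12) := fun p => ⟨(rt p).sq.integrable μ, s p⟩
  have key := (((((HI.const μ (bk (π p) (π q) ^ 2)).add (hs q)).add (hs p)).add
    ((hz q).cmul (2 * bk (π p) (π q)))).sub ((hz p).cmul (2 * bk (π p) (π q)))).sub
    ((HI.of ((rt p).mul (rt q)) μ).cmul 2)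
  rw [key.2] at this
  simp only [integral_const, probReal_univ, smul_eq_mul, one_mul] at this
  linarith

theorem perm_ae_sq {μ : Measure (ℝ × ℝ)} (hμ : IsPermuton μ) :
    ∀ᵐ p ∂μ, p ∈ Set.Icc (0 : ℝ) 1 ×ˢ Set.Icc (0 : ℝ) 1 := by
  have := hμ.1
  have h := hμ.2.1 0 1 le_rfl zero_le_one le_rfl
  have h1 : μ (Set.Icc (0 : ℝ) 1 ×ˢ Set.Icc (0 : ℝ) 1) = 1 := by simpa using h
  exact (prob_compl_eq_zero_iff (measurableSet_Icc.prod measurableSet_Icc)).2 h1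

theorem perm_fst {μ : Measure (ℝ × ℝ)} (hμ : IsPermuton μ) : μ.map Prod.fst = uI := by
  have := hμ.1
  have : IsProbabilityMeasure (μ.map Prod.fst) := Measure.isProbabilityMeasure_map measurable_fst.aemeasurable
  refine Measure.ext_of_Iic _ _ fun a => ?_
  rw [Measure.map_apply measurable_fst measurableSet_Iic, Measure.restrict_apply measurableSet_Iic]
  have e : μ (Prod.fst ⁻¹' Set.Iic a) = μ (Set.Icc 0 (min a 1) ×ˢ Set.Icc (0 : ℝ) 1) := by
    refine measure_congr ?_
    filter_upwards [perm_ae_sq hμ] with p hp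
    simp only [Set.mem_prod, Set.mem_Icc] at hp
    refine propext ?_
    change p.1 ≤ a ↔ (0 ≤ p.1 ∧ p.1 ≤ min a 1) ∧ (0 ≤ p.2 ∧ p.2 ≤ 1)
    simp only [le_min_iff]; tauto
  have e2 : Set.Iic a ∩ Set.Icc (0 : ℝ) 1 = Set.Icc 0 (min a 1) := by
    ext t; simp only [Set.mem_inter_iff, Set.mem_Iic, Set.mem_Icc, le_min_iff]; tauto
  rw [e, e2]
  rcases lt_or_ge a 0 with h | h
  · have : Set.Icc 0 (min a 1) = ∅ := Set.Icc_eq_empty (by simp [h])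
    simp [this]
  · rw [hμ.2.1 0 _ le_rfl (le_min h zero_le_one) (min_le_right _ _)]; simp

theorem perm_snd {μ : Measure (ℝ × ℝ)} (hμ : IsPermuton μ) : μ.map Prod.snd = uI := by
  have := hμ.1
  have : IsProbabilityMeasure (μ.map Prod.snd) := Measure.isProbabilityMeasure_map measurable_snd.aemeasurable
  refine Measure.ext_of_Iic _ _ fun a => ?_
  rw [Measure.map_apply measurable_snd measurableSet_Iic, Measure.restrict_apply measurableSet_Iic]
  have e : μ (Prod.snd ⁻¹' Set.Iic a) = μ (Set.Icc (0 : ℝ) 1 ×ˢ Set.Icc 0 (min a 1)) := by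
    refine measure_congr ?_
    filter_upwards [perm_ae_sq hμ] with p hp
    simp only [Set.mem_prod, Set.mem_Icc] at hp
    refine propext ?_
    change p.2 ≤ a ↔ (0 ≤ p.1 ∧ p.1 ≤ 1) ∧ (0 ≤ p.2 ∧ p.2 ≤ min a 1)
    simp only [le_min_iff]; tauto
  have e2 : Set.Iic a ∩ Set.Icc (0 : ℝ) 1 = Set.Icc 0 (min a 1) := by
    ext t; simp only [Set.mem_inter_iff, Set.mem_Iic, Set.mem_Icc, le_min_iff]; tauto
  rw [e, e2]
  rcases lt_or_ge a 0 with h | h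
  · have : Set.Icc 0 (min a 1) = ∅ := Set.Icc_eq_empty (by simp [h])
    simp [this]
  · rw [hμ.2.2 0 _ le_rfl (le_min h zero_le_one) (min_le_right _ _)]; simp

/-- generic properties of a.e. points of the marginals -/
theorem ae_fst {μ : Measure (ℝ × ℝ)} {π : ℝ × ℝ → ℝ} (hπ : Measurable π) (h : μ.map π = uI) (x : ℝ) :
    ∀ᵐ r ∂μ, (0 < π r ∧ π r < 1) ∧ π r ≠ x := by
  refine ae_of_ae_map hπ.aemeasurable (p := fun t => (0 < t ∧ t < 1) ∧ t ≠ x) ?_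
  rw [h, ae_restrict_iff' measurableSet_Icc]
  filter_upwards [Measure.ae_ne volume x, Measure.ae_ne volume (0 : ℝ), Measure.ae_ne volume (1 : ℝ)]
    with t h1 h2 h3 ht
  exact ⟨⟨lt_of_le_of_ne ht.1 (Ne.symm h2), lt_of_le_of_ne ht.2 h3⟩, h1⟩

/-- the smoothed discrepancy function -/
noncomputable def Hr (μ : Measure (ℝ × ℝ)) (x y : ℝ) : ℝ := ∫ r, bk x r.1 * bk y r.2 ∂μ

theorem bk_contAt {x r : ℝ} (h : r ≠ x) : ContinuousAt (fun t => bk t r) x := by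
  rcases lt_or_gt_of_ne h with h | h
  · have : (fun t => clp t - clp r - 1 / 2) =ᶠ[nhds x] fun t => bk t r := by
      filter_upwards [lt_mem_nhds h] with t ht
      simp [bk, ht]
    refine ContinuousAt.congr ?_ this
    exact ((clp_cont.sub continuous_const).sub continuous_const).continuousAt
  · have : (fun t => clp t - clp r - -(1 / 2)) =ᶠ[nhds x] fun t => bk t r := by
      filter_upwards [gt_mem_nhds h] with t ht
      simp [bk, ht, not_lt.2 (le_of_lt ht)]
    refine ContinuousAt.congr ?_ this
    exact ((clp_cont.sub continuous_const).sub continuous_const).continuousAt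

theorem bk2_bm (x y : ℝ) : BM (fun r : ℝ × ℝ => bk x r.1 * bk y r.2) :=
  ((bk_bm_right x).comp measurable_fst).mul ((bk_bm_right y).comp measurable_snd)

theorem Hr_cont {μ : Measure (ℝ × ℝ)} (hμ : IsPermuton μ) : Continuous (fun z : ℝ × ℝ => Hr μ z.1 z.2) := by
  have := hμ.1
  rw [continuous_iff_continuousAt]
  intro z
  obtain ⟨C, hC⟩ := bk_bm.2
  refine continuousAt_of_dominated (bound := fun _ => C * C) (Eventually.of_forall fun w =>
    (bk2_bm _ _).1.aestronglyMeasurable) (Eventually.of_forall fun w => Eventually.of_forall fun r => ?_)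
    (integrable_const _) ?_
  · rw [norm_mul]
    exact mul_le_mul (hC (w.1, r.1)) (hC (w.2, r.2)) (norm_nonneg _) ((abs_nonneg _).trans (hC (0, 0)))
  · filter_upwards [ae_fst measurable_fst (perm_fst hμ) z.1, ae_fst measurable_snd (perm_snd hμ) z.2] with r h1 h2
    exact ((bk_contAt h1.2).comp (f := fun w : ℝ × ℝ => w.1) continuous_fst.continuousAt).mul
      ((bk_contAt h2.2).comp (f := fun w : ℝ × ℝ => w.2) continuous_snd.continuousAt)

theorem Hr_zero {μ : Measure (ℝ × ℝ)} (hμ : IsPermuton μ)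
    (h : ∫ p : ℝ × ℝ, ∫ q : ℝ × ℝ, Hr μ p.1 q.2 ^ 2 ∂μ ∂μ = 0) (x y : ℝ) : Hr μ x y = 0 := by
  have := hμ.1
  have hc := Hr_cont hμ
  have hb : BM (fun z : ℝ × ℝ => Hr μ z.1 z.2 ^ 2) := by
    refine BM.sq (BM.integral (F := fun (z : ℝ × ℝ) (r : ℝ × ℝ) => bk z.1 r.1 * bk z.2 r.2) ?_ μ)
    exact (bk_bm.comp (k := fun w : (ℝ × ℝ) × (ℝ × ℝ) => (w.1.1, w.2.1)) (by fun_prop)).mul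
      (bk_bm.comp (k := fun w : (ℝ × ℝ) × (ℝ × ℝ) => (w.1.2, w.2.2)) (by fun_prop))
  have e1 : ∀ p : ℝ × ℝ, ∫ q : ℝ × ℝ, Hr μ p.1 q.2 ^ 2 ∂μ = ∫ y, Hr μ p.1 y ^ 2 ∂uI := by
    intro p
    rw [← perm_snd hμ, integral_map measurable_snd.aemeasurable]
    exact (hb.comp (k := fun y => (p.1, y)) (by fun_prop)).1.aestronglyMeasurable
  simp_rw [e1] at h
  rw [← integral_map (f := fun x => ∫ y, Hr μ x y ^ 2 ∂uI) measurable_fst.aemeasurable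
    (BM.integral (F := fun x y => Hr μ x y ^ 2) hb uI).1.aestronglyMeasurable, perm_fst hμ,
    ← integral_prod (f := fun z : ℝ × ℝ => Hr μ z.1 z.2 ^ 2) (hb.integrable _),
    integral_eq_zero_iff_of_nonneg (fun _ => sq_nonneg _) (hb.integrable _)] at h
  have e2 : uI.prod uI = volume.restrict (Set.Icc (0 : ℝ) 1 ×ˢ Set.Icc (0 : ℝ) 1) := by
    rw [Measure.prod_restrict]; rfl
  rw [e2] at h
  have h' : (fun z : ℝ × ℝ => Hr μ z.1 z.2) =ᵐ[volume.restrict (Set.Icc (0 : ℝ) 1 ×ˢ Set.Icc (0 : ℝ) 1)] fun _ => 0 := by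
    filter_upwards [h] with z hz
    simpa using hz
  have := Measure.eqOn_of_ae_eq h' hc.continuousOn continuousOn_const (by
    rw [interior_prod_eq, closure_prod_eq, closure_interior_Icc zero_ne_one])
  have e3 : Hr μ (clp x) (clp y) = 0 :=
    this (x := (clp x, clp y)) ⟨⟨clp_nonneg x, clp_le x⟩, ⟨clp_nonneg y, clp_le y⟩⟩
  rw [← e3]
  refine integral_congr_ae ?_
  filter_upwards [ae_fst measurable_fst (perm_fst hμ) 0, ae_fst measurable_snd (perm_snd hμ) 0] with r h1 h2
  rw [bk_clp h1.1.1 h1.1.2, bk_clp h2.1.1 h2.1.2]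

theorem bk_diff {r x : ℝ} (h0 : 0 < r) (hx : r ≠ x) :
    bk 0 r - bk x r = (if r ≤ x then 1 else 0) - clp x := by
  have e : clp 0 = 0 := clp_of_mem le_rfl zero_le_one
  unfold bk
  rcases lt_or_gt_of_ne hx with h | h
  · simp [h, h.le, h0, not_lt.2 h0.le, e]; ring
  · simp [h, h0, not_lt.2 h0.le, not_lt.2 (le_of_lt h), not_le.2 h, e]; ring

theorem perm_rect {μ : Measure (ℝ × ℝ)} (hμ : IsPermuton μ) (h : ∀ x y, Hr μ x y = 0) (x y : ℝ) :
    μ (Set.Iic x ×ˢ Set.Iic y) = ENNReal.ofReal (clp x * clp y) := by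
  have := hμ.1
  have hz1 : ∀ x, HI μ (fun r => bk x r.1) 0 := fun x =>
    ⟨((bk_bm_right x).comp measurable_fst).integrable μ, by
      rw [← integral_map (f := fun t => bk x t) measurable_fst.aemeasurable (bk_bm_right _).1.aestronglyMeasurable,
        perm_fst hμ, uI_bk_zero]⟩
  have hz2 : ∀ x, HI μ (fun r => bk x r.2) 0 := fun x =>
    ⟨((bk_bm_right x).comp measurable_snd).integrable μ, by
      rw [← integral_map (f := fun t => bk x t) measurable_snd.aemeasurable (bk_bm_right _).1.aestronglyMeasurable,
        perm_snd hμ, uI_bk_zero]⟩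
  have hH : ∀ x y, HI μ (fun r => bk x r.1 * bk y r.2) 0 := fun x y => ⟨(bk2_bm x y).integrable μ, h x y⟩
  have key := (((((hH 0 0).sub (hH x 0)).sub (hH 0 y)).add (hH x y)).add
    (((hz1 0).sub (hz1 x)).cmul (clp y))).add ((((hz2 0).sub (hz2 y)).cmul (clp x))) |>.add
    (HI.const μ (clp x * clp y))
  have e : ∫ r, (Set.Iic x ×ˢ Set.Iic y).indicator (fun _ => (1 : ℝ)) r ∂μ = clp x * clp y := by
    rw [show clp x * clp y = 0 - 0 - 0 + 0 + clp y * (0 - 0) + clp x * (0 - 0) + clp x * clp y by ring, ← key.2]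
    refine integral_congr_ae ?_
    filter_upwards [ae_fst measurable_fst (perm_fst hμ) x, ae_fst measurable_snd (perm_snd hμ) y] with r h1 h2
    have d1 := bk_diff h1.1.1 h1.2
    have d2 := bk_diff h2.1.1 h2.2
    have : (Set.Iic x ×ˢ Set.Iic y).indicator (fun _ => (1 : ℝ)) r =
        (if r.1 ≤ x then 1 else 0) * (if r.2 ≤ y then 1 else 0) := by
      by_cases a : r.1 ≤ x <;> by_cases b : r.2 ≤ y <;> simp [Set.indicator, a, b, Prod.le_def, -Set.Iic_prod_Iic]
    rw [this]
    rw [sub_eq_iff_eq_add.1 d1.symm, sub_eq_iff_eq_add.1 d2.symm]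
    ring
  have hm : MeasurableSet (Set.Iic x ×ˢ Set.Iic y) := measurableSet_Iic.prod measurableSet_Iic
  rw [integral_indicator hm, integral_const] at e
  simp only [smul_eq_mul, mul_one, measureReal_restrict_apply_univ] at e
  rw [← e, ofReal_measureReal]

theorem ext_rect {μ ν : Measure (ℝ × ℝ)} [IsFiniteMeasure μ] [IsFiniteMeasure ν]
    (h : ∀ x y, μ (Set.Iic x ×ˢ Set.Iic y) = ν (Set.Iic x ×ˢ Set.Iic y)) : μ = ν := by
  have s1 : ∀ y, ∀ s : Set ℝ, MeasurableSet s → μ (s ×ˢ Set.Iic y) = ν (s ×ˢ Set.Iic y) := by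
    intro y s hs
    have : (μ.restrict (Prod.snd ⁻¹' Set.Iic y)).map Prod.fst = (ν.restrict (Prod.snd ⁻¹' Set.Iic y)).map Prod.fst := by
      refine Measure.ext_of_Iic _ _ fun a => ?_
      rw [Measure.map_apply measurable_fst measurableSet_Iic, Measure.map_apply measurable_fst measurableSet_Iic,
        Measure.restrict_apply (measurable_fst measurableSet_Iic), Measure.restrict_apply (measurable_fst measurableSet_Iic)]
      exact h a y
    have := congrArg (fun m => m s) this
    rwa [Measure.map_apply measurable_fst hs, Measure.map_apply measurable_fst hs,
        Measure.restrict_apply (measurable_fst hs), Measure.restrict_apply (measurable_fst hs)] at this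
  refine Measure.ext_prod fun {s t} hs ht => ?_
  have : (μ.restrict (Prod.fst ⁻¹' s)).map Prod.snd = (ν.restrict (Prod.fst ⁻¹' s)).map Prod.snd := by
    refine Measure.ext_of_Iic _ _ fun a => ?_
    rw [Measure.map_apply measurable_snd measurableSet_Iic, Measure.map_apply measurable_snd measurableSet_Iic,
      Measure.restrict_apply (measurable_snd measurableSet_Iic), Measure.restrict_apply (measurable_snd measurableSet_Iic),
      Set.inter_comm]
    exact s1 a s hs
  have := congrArg (fun m => m t) this
  rwa [Measure.map_apply measurable_snd ht, Measure.map_apply measurable_snd ht,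
      Measure.restrict_apply (measurable_snd ht), Measure.restrict_apply (measurable_snd ht), Set.inter_comm] at this

theorem unif_eq : uniformPermuton = uI.prod uI := by
  rw [Measure.prod_restrict]; rfl

theorem unif_perm : IsPermuton uniformPermuton := by
  rw [unif_eq]
  refine ⟨inferInstance, fun x x' h0 h1 h2 => ?_, fun x x' h0 h1 h2 => ?_⟩
  · rw [Measure.prod_prod, Measure.restrict_apply measurableSet_Icc, Measure.restrict_apply measurableSet_Icc,
      Set.inter_self, Set.inter_eq_left.2 (Set.Icc_subset_Icc h0 h2)]
    simp
  · rw [Measure.prod_prod, Measure.restrict_apply measurableSet_Icc, Measure.restrict_apply measurableSet_Icc,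
      Set.inter_self, Set.inter_eq_left.2 (Set.Icc_subset_Icc h0 h2)]
    simp

theorem unif_Hr (x y : ℝ) : Hr uniformPermuton x y = 0 := by
  unfold Hr
  rw [unif_eq, integral_prod_mul (fun t => bk x t) (fun t => bk y t), uI_bk_zero, zero_mul]

theorem eq_unif {μ : Measure (ℝ × ℝ)} (hμ : IsPermuton μ) (h : ∀ x y, Hr μ x y = 0) :
    μ = uniformPermuton := by
  have := hμ.1
  have := unif_perm.1
  exact ext_rect fun x y => by rw [perm_rect hμ h, perm_rect unif_perm unif_Hr]


section pimeas
variable {α : Type*} [MeasurableSpace α] (μ : Measure α) [IsProbabilityMeasure μ]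

theorem pi_succ {n : ℕ} {f : (Fin (n + 1) → α) → ℝ} (hf : BM f) :
    ∫ p, f p ∂(Measure.pi fun _ : Fin (n + 1) => μ) =
      ∫ a, ∫ q, f (Fin.cons a q) ∂(Measure.pi fun _ : Fin n => μ) ∂μ := by
  have mp := (measurePreserving_piFinSuccAbove (fun _ : Fin (n + 1) => μ) 0).symm
  rw [← mp.integral_comp (MeasurableEquiv.measurableEmbedding _) f]
  have hc : BM (fun z : α × (Fin n → α) => f ((MeasurableEquiv.piFinSuccAbove (fun _ => α) 0).symm z)) :=
    hf.comp (MeasurableEquiv.measurable _)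
  rw [integral_prod _ (hc.integrable _)]
  refine integral_congr_ae (Eventually.of_forall fun a => integral_congr_ae (Eventually.of_forall fun q => ?_))
  change f (Fin.insertNth 0 a q) = _
  rw [Fin.insertNth_zero]
  rfl

theorem pi_zero' (f : (Fin 0 → α) → ℝ) :
    ∫ p, f p ∂(Measure.pi fun _ : Fin 0 => μ) = f ![] := by
  rw [Measure.pi_of_empty (fun _ : Fin 0 => μ) ![], integral_dirac]

theorem cons_meas {n : ℕ} (a : α) : Measurable (fun q : Fin n → α => (Fin.cons a q : Fin (n + 1) → α)) := by
  rw [measurable_pi_iff]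
  intro i
  refine Fin.cases ?_ (fun j => ?_) i
  · simp
  · simpa using measurable_pi_apply j

theorem pi_four {f : (Fin 4 → α) → ℝ} (hf : BM f) :
    ∫ p, f p ∂(Measure.pi fun _ : Fin 4 => μ) =
      ∫ a, ∫ b, ∫ c, ∫ d, f ![a, b, c, d] ∂μ ∂μ ∂μ ∂μ := by
  rw [pi_succ μ hf]
  congr 1; ext a
  have h1 := hf.comp (cons_meas (n := 3) a)
  rw [pi_succ μ h1]
  congr 1; ext b
  have h2 := h1.comp (cons_meas (n := 2) b)
  rw [pi_succ μ h2]
  congr 1; ext c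
  have h3 := h2.comp (cons_meas (n := 1) c)
  rw [pi_succ μ h3]
  congr 1; ext d
  rw [pi_zero']
  rfl

theorem pi_perm {n : ℕ} (f : (Fin n → α) → ℝ) (σ : Equiv.Perm (Fin n)) :
    ∫ p, f (p ∘ σ) ∂(Measure.pi fun _ : Fin n => μ) = ∫ p, f p ∂(Measure.pi fun _ : Fin n => μ) := by
  have mp := measurePreserving_piCongrLeft (fun _ : Fin n => μ) σ⁻¹
  rw [← mp.integral_comp (MeasurableEquiv.measurableEmbedding _) f]
  congr 1; ext p; congr 1; ext i
  have := Equiv.piCongrLeft_apply_apply (P := fun _ : Fin n => α) (e := σ⁻¹) p (σ i)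
  have hs : σ⁻¹ (σ i) = i := σ.symm_apply_apply i
  rw [hs] at this
  exact this.symm
end pimeas

/-- signed crossing of the chords 01 and 23 -/
noncomputable def wr (x : Fin 4 → ℝ) : ℝ := bk (x 0) (x 2) - bk (x 1) (x 2) - bk (x 0) (x 3) + bk (x 1) (x 3)

/-- integer sign of a difference -/
def sgz (i j : Fin 4) : ℤ := if j < i then 1 else if i < j then -1 else 0

/-- combinatorial version of `wr` -/
def wz (ρ : Equiv.Perm (Fin 4)) : ℤ :=
  sgz (ρ 0) (ρ 2) - sgz (ρ 1) (ρ 2) - sgz (ρ 0) (ρ 3) + sgz (ρ 1) (ρ 3)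

theorem wr_eq {x : Fin 4 → ℝ} {ρ : Equiv.Perm (Fin 4)} (h : ∀ i j, x i < x j ↔ ρ i < ρ j) :
    wr x = -(1 / 2) * (wz ρ : ℝ) := by
  have e : ∀ i j, bk (x i) (x j) = clp (x i) - clp (x j) - 1 / 2 * (sgz (ρ i) (ρ j) : ℝ) := by
    intro i j
    unfold bk sgz
    simp only [h]
    split_ifs <;> simp
  unfold wr wz
  simp only [e]
  push_cast
  ring

theorem wr_sq_eq {x : Fin 4 → ℝ} {ρ : Equiv.Perm (Fin 4)} (h : ∀ i j, x i < x j ↔ ρ i < ρ j)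
    (σ : Equiv.Perm (Fin 4)) : wr (x ∘ σ) ^ 2 = 1 / 4 * ((wz (ρ * σ) ^ 2 : ℤ) : ℝ) := by
  rw [wr_eq (ρ := ρ * σ) (fun i j => by simpa using h (σ i) (σ j))]
  push_cast; ring

theorem exists_pattern {x : Fin 4 → ℝ} (hx : Function.Injective x) :
    ∃ ρ : Equiv.Perm (Fin 4), ∀ i j, x i < x j ↔ ρ i < ρ j := by
  refine ⟨(Tuple.sort x)⁻¹, fun i j => ?_⟩
  have hm : StrictMono (x ∘ Tuple.sort x) :=
    (Tuple.monotone_sort x).strictMono_of_injective (hx.comp (Tuple.sort x).injective)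
  have := hm.lt_iff_lt (a := (Tuple.sort x)⁻¹ i) (b := (Tuple.sort x)⁻¹ j)
  simpa using this

/-- the set of patterns -/
noncomputable def SS : Finset (Equiv.Perm (Fin 4)) :=
  {mk4 0 1 2 3, mk4 0 3 2 1, mk4 1 0 3 2, mk4 1 2 3 0, mk4 2 1 0 3, mk4 2 3 0 1, mk4 3 0 1 2, mk4 3 2 1 0}

set_option maxRecDepth 100000 in
theorem comb : ∀ ρ : Equiv.Perm (Fin 4),
    (∑ σ : Equiv.Perm (Fin 4), wz σ ^ 2 * wz (ρ * σ) ^ 2) = if ρ ∈ SS then 128 else 0 := by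
  decide +kernel

/-- event of a pattern -/
def Ev (π : Equiv.Perm (Fin 4)) : Set (Fin 4 → ℝ × ℝ) :=
  {p : Fin 4 → ℝ × ℝ | ∃ σ : Equiv.Perm (Fin 4),
      StrictMono (fun i => (p (σ i)).1) ∧
        ∀ i j : Fin 4, (p (σ i)).2 < (p (σ j)).2 ↔ π i < π j}

theorem perm_eq_one_of_lt {σ : Equiv.Perm (Fin 4)} (h : ∀ i j, σ i < σ j ↔ i < j) : σ = 1 := by
  have hm : StrictMono σ := fun i j hij => (h i j).2 hij
  have := Subsingleton.elim (hm.orderIsoOfSurjective σ σ.surjective) (OrderIso.refl _)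
  refine Equiv.ext fun i => ?_
  have := congrArg (fun e : Fin 4 ≃o Fin 4 => e i) this
  simpa using this

theorem mem_Ev {p : Fin 4 → ℝ × ℝ} {α β : Equiv.Perm (Fin 4)}
    (hα : ∀ i j, (p i).1 < (p j).1 ↔ α i < α j) (hβ : ∀ i j, (p i).2 < (p j).2 ↔ β i < β j)
    (π : Equiv.Perm (Fin 4)) : p ∈ Ev π ↔ β * α⁻¹ = π := by
  constructor
  · rintro ⟨σ, h1, h2⟩
    have e1 : α * σ = 1 := by
      apply perm_eq_one_of_lt
      intro i j
      have := h1.lt_iff_lt (a := i) (b := j)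
      rw [hα] at this
      simpa using this
    have e2 : σ = α⁻¹ := eq_inv_of_mul_eq_one_right e1
    subst e2
    have e3 : (β * α⁻¹) * π⁻¹ = 1 := by
      apply perm_eq_one_of_lt
      intro i j
      have := h2 (π⁻¹ i) (π⁻¹ j)
      rw [hβ] at this
      simpa using this
    exact mul_inv_eq_one.1 e3
  · rintro rfl
    refine ⟨α⁻¹, fun i j hij => ?_, fun i j => ?_⟩
    · simp only [hα]; simpa using hij
    · rw [hβ]; simp

theorem Ev_meas (π : Equiv.Perm (Fin 4)) : MeasurableSet (Ev π) := by
  have : Ev π = ⋃ σ : Equiv.Perm (Fin 4),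
    ((⋂ i : Fin 4, ⋂ j : Fin 4, {p : Fin 4 → ℝ × ℝ | i < j → (p (σ i)).1 < (p (σ j)).1}) ∩
    ⋂ i : Fin 4, ⋂ j : Fin 4, {p : Fin 4 → ℝ × ℝ | (p (σ i)).2 < (p (σ j)).2 ↔ π i < π j}) := by
    ext p
    simp only [Ev, StrictMono, Set.mem_ofPred_eq, Set.mem_iUnion, Set.mem_inter_iff, Set.mem_iInter]
  rw [this]
  have m1 : ∀ i, Measurable fun p : Fin 4 → ℝ × ℝ => (p i).1 := fun i => by fun_prop
  have m2 : ∀ i, Measurable fun p : Fin 4 → ℝ × ℝ => (p i).2 := fun i => by fun_prop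
  refine MeasurableSet.iUnion fun σ => MeasurableSet.inter ?_ ?_
  · refine MeasurableSet.iInter fun i => MeasurableSet.iInter fun j => ?_
    by_cases h : i < j
    · simpa [h] using measurableSet_lt (m1 (σ i)) (m1 (σ j))
    · simp [h]
  · refine MeasurableSet.iInter fun i => MeasurableSet.iInter fun j => ?_
    by_cases h : π i < π j
    · simpa [h] using measurableSet_lt (m2 (σ i)) (m2 (σ j))
    · simpa [h] using measurableSet_le (m2 (σ j)) (m2 (σ i))

/-- the four-point test function -/
noncomputable def G (p : Fin 4 → ℝ × ℝ) : ℝ :=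
  wr (fun i => (p i).1) ^ 2 * wr (fun i => (p i).2) ^ 2

theorem G_bm : BM G := by
  have k : ∀ {π : ℝ × ℝ → ℝ}, Measurable π → BM (fun p : Fin 4 → ℝ × ℝ => wr (fun i => π (p i))) := by
    intro π hπ
    have kk : ∀ i j, BM (fun p : Fin 4 → ℝ × ℝ => bk (π (p i)) (π (p j))) := fun i j =>
      bk_bm.comp (k := fun p : Fin 4 → ℝ × ℝ => (π (p i), π (p j))) (by fun_prop)
    exact (((kk 0 2).sub (kk 1 2)).sub (kk 0 3)).add (kk 1 3)
  exact (k measurable_fst).sq.mul (k measurable_snd).sq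

theorem pointwise {p : Fin 4 → ℝ × ℝ} (h1 : Function.Injective fun i => (p i).1)
    (h2 : Function.Injective fun i => (p i).2) :
    ∑ π ∈ SS, (Ev π).indicator (fun _ => (1 : ℝ)) p =
      1 / 8 * ∑ σ : Equiv.Perm (Fin 4), G (p ∘ σ) := by
  classical
  obtain ⟨α, hα⟩ := exists_pattern h1
  obtain ⟨β, hβ⟩ := exists_pattern h2
  have e : ∀ σ : Equiv.Perm (Fin 4), G (p ∘ σ) =
      1 / 16 * ((wz (α * σ) ^ 2 * wz (β * σ) ^ 2 : ℤ) : ℝ) := by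
    intro σ
    have a1 := wr_sq_eq hα σ
    have a2 := wr_sq_eq hβ σ
    unfold G
    simp only [Function.comp_def] at a1 a2 ⊢
    rw [a1, a2]; push_cast; ring
  have s : ∑ σ : Equiv.Perm (Fin 4), (wz (α * σ) ^ 2 * wz (β * σ) ^ 2) =
      ∑ σ : Equiv.Perm (Fin 4), wz σ ^ 2 * wz (β * α⁻¹ * σ) ^ 2 := by
    rw [← Equiv.sum_comp (Equiv.mulLeft α) (fun σ => wz σ ^ 2 * wz (β * α⁻¹ * σ) ^ 2)]
    refine Finset.sum_congr rfl fun σ _ => ?_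
    simp [mul_assoc]
  simp_rw [e, ← Finset.mul_sum]
  rw [← Int.cast_sum, s, comb]
  simp only [Set.indicator, mem_Ev hα hβ, Finset.sum_ite_eq]
  split_ifs <;> norm_num

theorem ae_inj {μ : Measure (ℝ × ℝ)} [IsProbabilityMeasure μ] {π : ℝ × ℝ → ℝ} (hπ : Measurable π)
    (h : μ.map π = uI) :
    ∀ᵐ p ∂(Measure.pi fun _ : Fin 4 => μ), Function.Injective fun i => π (p i) := by
  have key : ∀ᵐ p ∂(Measure.pi fun _ : Fin 4 => μ), π (p 0) ≠ π (p 1) := by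
    have hE : MeasurableSet {p : Fin 4 → ℝ × ℝ | π (p 0) = π (p 1)} :=
      measurableSet_eq_fun (by fun_prop) (by fun_prop)
    have hb : BM ({p : Fin 4 → ℝ × ℝ | π (p 0) = π (p 1)}.indicator fun _ => (1 : ℝ)) := by
      refine ⟨measurable_const.indicator hE, 1, fun p => ?_⟩
      by_cases hp : π (p 0) = π (p 1) <;> simp [Set.indicator, hp]
    have z : ∫ p, {p : Fin 4 → ℝ × ℝ | π (p 0) = π (p 1)}.indicator (fun _ => (1 : ℝ)) p
        ∂(Measure.pi fun _ : Fin 4 => μ) = 0 := by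
      rw [pi_four μ hb]
      have : ∀ a, ∫ b, ∫ _c, ∫ _d, {p : Fin 4 → ℝ × ℝ | π (p 0) = π (p 1)}.indicator (fun _ => (1 : ℝ))
          ![a, b, _c, _d] ∂μ ∂μ ∂μ = 0 := by
        intro a
        rw [← integral_zero (ℝ × ℝ) ℝ (μ := μ)]
        refine integral_congr_ae ?_
        filter_upwards [ae_fst hπ h (π a)] with b hb
        simp [Set.indicator, hb.2.symm]
      simp [this]
    rw [integral_indicator hE, integral_const] at z
    simp only [smul_eq_mul, mul_one, measureReal_restrict_apply_univ] at z
    rw [measureReal_eq_zero_iff] at z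
    exact measure_eq_zero_iff_ae_notMem.1 z
  have all : ∀ σ : Equiv.Perm (Fin 4), ∀ᵐ p ∂(Measure.pi fun _ : Fin 4 => μ), π (p (σ 0)) ≠ π (p (σ 1)) := by
    intro σ
    have mp := measurePreserving_piCongrLeft (fun _ : Fin 4 => μ) σ⁻¹
    have := mp.quasiMeasurePreserving.ae key
    filter_upwards [this] with p hp
    have e := fun i => Equiv.piCongrLeft_apply_apply (P := fun _ : Fin 4 => ℝ × ℝ) (e := σ⁻¹) p (σ i)
    have hs : ∀ i, σ⁻¹ (σ i) = i := fun i => σ.symm_apply_apply i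
    have e0 := e 0
    have e1 := e 1
    rw [hs] at e0 e1
    intro hh
    apply hp
    change π ((Equiv.piCongrLeft (fun _ : Fin 4 => ℝ × ℝ) σ⁻¹) p 0) = π ((Equiv.piCongrLeft (fun _ : Fin 4 => ℝ × ℝ) σ⁻¹) p 1)
    rw [e0, e1]; exact hh
  filter_upwards [ae_all_iff.2 all] with p hp i j hij
  by_contra hne
  have : ∀ i j : Fin 4, i ≠ j → ∃ σ : Equiv.Perm (Fin 4), σ 0 = i ∧ σ 1 = j := by decide +kernel
  obtain ⟨σ, h0, h1⟩ := this i j hne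
  apply hp σ
  rw [h0, h1]; exact hij

theorem sum_eq {μ : Measure (ℝ × ℝ)} (hμ : IsPermuton μ) :
    ∑ π ∈ SS, PermutonDensity π μ = 3 * ∫ p, G p ∂(Measure.pi fun _ : Fin 4 => μ) := by
  have := hμ.1
  have e1 : ∀ π, PermutonDensity π μ =
      ∫ p, (Ev π).indicator (fun _ => (1 : ℝ)) p ∂(Measure.pi fun _ : Fin 4 => μ) := by
    intro π
    rw [integral_indicator (Ev_meas π), integral_const]
    simp only [smul_eq_mul, mul_one, measureReal_restrict_apply_univ]
    rfl
  simp_rw [e1]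
  rw [← integral_finsetSum _ (fun π _ => (integrable_const (1 : ℝ)).indicator (Ev_meas π))]
  have e2 : ∫ p, ∑ π ∈ SS, (Ev π).indicator (fun _ => (1 : ℝ)) p ∂(Measure.pi fun _ : Fin 4 => μ) =
      ∫ p, 1 / 8 * ∑ σ : Equiv.Perm (Fin 4), G (p ∘ σ) ∂(Measure.pi fun _ : Fin 4 => μ) := by
    refine integral_congr_ae ?_
    filter_upwards [ae_inj measurable_fst (perm_fst hμ), ae_inj measurable_snd (perm_snd hμ)] with p h1 h2
    exact pointwise h1 h2
  rw [e2, integral_const_mul, integral_finsetSum]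
  · simp_rw [pi_perm μ G]
    rw [Finset.sum_const, Finset.card_univ, Fintype.card_perm, Fintype.card_fin]
    simp [Nat.factorial]; ring
  · intro σ _
    exact (G_bm.comp (k := fun p : Fin 4 → ℝ × ℝ => p ∘ σ) (by
      rw [measurable_pi_iff]; intro i; exact measurable_pi_apply (σ i))).integrable _

theorem final_formula {μ : Measure (ℝ × ℝ)} (hμ : IsPermuton μ) :
    (1 / 3 : ℝ) ≤ ∑ π ∈ SS, PermutonDensity π μ ∧
      (∑ π ∈ SS, PermutonDensity π μ = (1 / 3 : ℝ) ↔ μ = uniformPermuton) := by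
  have := hμ.1
  have hX := ker_of_marginal μ Prod.fst measurable_fst (perm_fst hμ)
  have hY := ker_of_marginal μ Prod.snd measurable_snd (perm_snd hμ)
  have F := main_formula μ hX hY
  have e : ∫ p, G p ∂(Measure.pi fun _ : Fin 4 => μ) = _ := (pi_four μ G_bm).trans F
  have LT := LT_nonneg μ hX hY
  have hHr : ∀ p q : ℝ × ℝ, hh μ (fun p q : ℝ × ℝ => bk p.1 q.1) (fun p q : ℝ × ℝ => bk p.2 q.2) p q
    = Hr μ p.1 q.2 := fun p q => rfl
  simp only [hHr] at e LT
  rw [sum_eq hμ, e]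
  have Q0 : 0 ≤ ∫ p : ℝ × ℝ, Hr μ p.1 p.2 ^ 2 ∂μ := integral_nonneg fun _ => sq_nonneg _
  have L0 : 0 ≤ ∫ p : ℝ × ℝ, ∫ q : ℝ × ℝ, Hr μ p.1 q.2 ^ 2 ∂μ ∂μ :=
    integral_nonneg fun _ => integral_nonneg fun _ => sq_nonneg _
  have m0 := sq_nonneg (∫ p : ℝ × ℝ, Hr μ p.1 p.2 ∂μ)
  refine ⟨by linarith, fun h => ?_, fun h => ?_⟩
  · exact eq_unif hμ (Hr_zero hμ (by linarith))
  · have z : ∀ x y, Hr μ x y = 0 := by rw [h]; exact unif_Hr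
    simp only [z]
    norm_num

theorem statement_8 (μ : Measure (ℝ × ℝ)) (hμ : IsPermuton μ) :
    (1 / 3 : ℝ) ≤ ∑ π ∈ ({
        mk4 0 1 2 3,
        mk4 0 3 2 1,
        mk4 1 0 3 2,
        mk4 1 2 3 0,
        mk4 2 1 0 3,
        mk4 2 3 0 1,
        mk4 3 0 1 2,
        mk4 3 2 1 0} : Finset (Equiv.Perm (Fin 4))), PermutonDensity π μ ∧
      (∑ π ∈ ({
        mk4 0 1 2 3,
        mk4 0 3 2 1,
        mk4 1 0 3 2,
        mk4 1 2 3 0,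
        mk4 2 1 0 3,
        mk4 2 3 0 1,
        mk4 3 0 1 2,
        mk4 3 2 1 0} : Finset (Equiv.Perm (Fin 4))), PermutonDensity π μ = (1 / 3 : ℝ) ↔
        μ = uniformPermuton) := by
  exact final_formula hμ
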